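/- Let d ≥ 1 and s ∈ (0,1). Then there exists a constant C = C(d,s) > 0 such that for every Schwartz function u : ℝ^d → ℂ and every x ∈ ℝ^d, the principal value integral converges: the function δ ↦ ∫_{{y : ‖x−y‖ > δ}} (u(x) − u(y))/‖x−y‖^{d+2s} dy tends, as δ → 0⁺, to C · ∫_{ℝ^d} e^{2πi x·ξ} ‖ξ‖^{2s} (𝓕u)(ξ) dξ. -/

import Mathlib

open MeasureTheory
open scoped RealInnerProductSpace

/-- Fourier transform `(𝓕u)(ξ) = ∫ e^{-2πi x·ξ} u(x) dx`. -/
noncomputable def FT {d : ℕ} (u : EuclideanSpace ℝ (Fin d) → ℂ)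
    (ξ : EuclideanSpace ℝ (Fin d)) : ℂ :=
  ∫ x : EuclideanSpace ℝ (Fin d),
    Complex.exp ((-(2 * Real.pi * ⟪x, ξ⟫) : ℝ) * Complex.I) * u x

section helpers

open Real Set Filter Topology

variable {d : ℕ}

/-- truncated kernel -/
noncomputable def FLW (d : ℕ) (s δ : ℝ) (h : EuclideanSpace ℝ (Fin d)) : ℝ :=
  (Set.Ioi δ).indicator (fun r : ℝ => (r ^ ((d : ℝ) + 2 * s))⁻¹) ‖h‖

/-- full kernel -/
noncomputable def FLK (d : ℕ) (s : ℝ) (ξ h : EuclideanSpace ℝ (Fin d)) : ℝ :=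
  (1 - Real.cos (2 * π * ⟪h, ξ⟫)) * (‖h‖ ^ ((d : ℝ) + 2 * s))⁻¹

lemma FLW_nonneg (s δ : ℝ) (h : EuclideanSpace ℝ (Fin d)) : 0 ≤ FLW d s δ h := by
  unfold FLW
  by_cases hh : ‖h‖ ∈ Ioi δ
  · rw [indicator_of_mem hh]; positivity
  · rw [indicator_of_notMem hh]

lemma FLW_le (s δ : ℝ) (h : EuclideanSpace ℝ (Fin d)) :
    FLW d s δ h ≤ (‖h‖ ^ ((d : ℝ) + 2 * s))⁻¹ := by
  unfold FLW
  by_cases hh : ‖h‖ ∈ Ioi δ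
  · rw [indicator_of_mem hh]
  · rw [indicator_of_notMem hh]; positivity

lemma FLW_measurable (s δ : ℝ) : Measurable (FLW d s δ) := by
  unfold FLW
  refine Measurable.comp (g := (Ioi δ).indicator (fun r : ℝ => (r ^ ((d : ℝ) + 2 * s))⁻¹)) ?_ measurable_norm
  refine Measurable.indicator ?_ measurableSet_Ioi
  fun_prop

lemma FLW_integrable (hd : 1 ≤ d) {s δ : ℝ} (hs : s ∈ Ioo (0 : ℝ) 1) (hδ : 0 < δ) :
    Integrable (FLW d s δ) := by
  have : Nonempty (Fin d) := ⟨⟨0, hd⟩⟩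
  unfold FLW
  rw [integrable_fun_norm_addHaar (E := EuclideanSpace ℝ (Fin d)) volume]
  have h1 : IntegrableOn (fun r : ℝ => r ^ (-1 - 2 * s)) (Ioi δ) :=
    integrableOn_Ioi_rpow_of_lt (by linarith [hs.1]) hδ
  have h2 := (h1.integrable_indicator measurableSet_Ioi).integrableOn (s := Ioi 0)
  refine h2.congr_fun ?_ measurableSet_Ioi
  intro y hy
  have hy : 0 < y := hy
  by_cases hh : y ∈ Ioi δ
  · simp only [indicator_of_mem hh, smul_eq_mul, finrank_euclideanSpace, Fintype.card_fin]
    rw [← Real.rpow_natCast, ← Real.rpow_neg hy.le, ← Real.rpow_add hy, Nat.cast_sub hd]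
    congr 1; push_cast; ring
  · simp only [indicator_of_notMem hh, smul_zero]

lemma FL_near_integrable (hd : 1 ≤ d) {s : ℝ} (hs : s ∈ Ioo (0 : ℝ) 1) :
    Integrable (fun h : EuclideanSpace ℝ (Fin d) =>
      (Iic 1).indicator (fun r : ℝ => r ^ 2 * (r ^ ((d : ℝ) + 2 * s))⁻¹) ‖h‖) := by
  have : Nonempty (Fin d) := ⟨⟨0, hd⟩⟩
  rw [integrable_fun_norm_addHaar (E := EuclideanSpace ℝ (Fin d)) volume]
  have h1 : IntegrableOn (fun r : ℝ => r ^ (1 - 2 * s)) (Ioc 0 1) := by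
    have := intervalIntegral.intervalIntegrable_rpow' (a := 0) (b := 1) (r := 1 - 2 * s) (by linarith [hs.2])
    rwa [intervalIntegrable_iff_integrableOn_Ioc_of_le zero_le_one] at this
  have h2 := (h1.integrable_indicator measurableSet_Ioc).integrableOn (s := Ioi 0)
  refine h2.congr_fun ?_ measurableSet_Ioi
  intro y hy
  have hy : 0 < y := hy
  by_cases hh : y ∈ Iic 1
  · have hh' : y ∈ Ioc 0 1 := ⟨hy, hh⟩
    simp only [indicator_of_mem hh, indicator_of_mem hh', smul_eq_mul, finrank_euclideanSpace, Fintype.card_fin]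
    rw [← Real.rpow_natCast, ← Real.rpow_neg hy.le, ← Real.rpow_natCast, ← Real.rpow_add hy, ← Real.rpow_add hy, Nat.cast_sub hd]
    congr 1; push_cast; ring
  · have hh' : y ∉ Ioc 0 1 := fun h => hh h.2
    simp only [indicator_of_notMem hh, indicator_of_notMem hh', smul_zero]

lemma FLK_nonneg (s : ℝ) (ξ h : EuclideanSpace ℝ (Fin d)) : 0 ≤ FLK d s ξ h := by
  unfold FLK
  have := Real.cos_le_one (2 * π * ⟪h, ξ⟫)
  have h2 : 0 ≤ 1 - Real.cos (2 * π * ⟪h, ξ⟫) := by linarith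
  positivity

lemma FLK_measurable (s : ℝ) (ξ : EuclideanSpace ℝ (Fin d)) : Measurable (FLK d s ξ) := by
  unfold FLK
  fun_prop

lemma FLK_integrable (hd : 1 ≤ d) {s : ℝ} (hs : s ∈ Ioo (0 : ℝ) 1) (ξ : EuclideanSpace ℝ (Fin d)) :
    Integrable (FLK d s ξ) := by
  have h1 := (FLW_integrable hd hs one_pos).const_mul 2
  have h2 := (FL_near_integrable hd hs).const_mul ((2 * π * ‖ξ‖) ^ 2 / 2)
  refine (h1.add h2).mono' (FLK_measurable s ξ).aestronglyMeasurable (Eventually.of_forall fun h => ?_)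
  rw [Real.norm_of_nonneg (FLK_nonneg s ξ h)]
  simp only [Pi.add_apply, FLW, FLK]
  have hp : 0 ≤ (‖h‖ ^ ((d : ℝ) + 2 * s))⁻¹ := by positivity
  by_cases hh : ‖h‖ ∈ Iic (1 : ℝ)
  · have hh' : ‖h‖ ∉ Ioi (1 : ℝ) := by simpa using hh
    rw [indicator_of_mem hh, indicator_of_notMem hh', mul_zero, zero_add, ← mul_assoc]
    refine mul_le_mul_of_nonneg_right ?_ hp
    have := Real.one_sub_sq_div_two_le_cos (x := 2 * π * ⟪h, ξ⟫)
    have h3 : (⟪h, ξ⟫ : ℝ) ^ 2 ≤ (‖h‖ * ‖ξ‖) ^ 2 := by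
      rw [← sq_abs]
      gcongr
      exact abs_real_inner_le_norm h ξ
    have h4 : (2 * π) ^ 2 * (⟪h, ξ⟫ : ℝ) ^ 2 ≤ (2 * π) ^ 2 * (‖h‖ * ‖ξ‖) ^ 2 := by gcongr
    nlinarith
  · have hh' : ‖h‖ ∈ Ioi (1 : ℝ) := by simpa using hh
    rw [indicator_of_notMem hh, indicator_of_mem hh', mul_zero, add_zero]
    refine mul_le_mul_of_nonneg_right ?_ hp
    linarith [Real.neg_one_le_cos (2 * π * ⟪h, ξ⟫)]

lemma FLK_scale (hd : 1 ≤ d) {s : ℝ} (hs : s ∈ Ioo (0 : ℝ) 1) (e : EuclideanSpace ℝ (Fin d)) (he : ‖e‖ = 1)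
    (ξ : EuclideanSpace ℝ (Fin d)) :
    ∫ h, FLK d s ξ h = (∫ h, FLK d s e h) * ‖ξ‖ ^ (2 * s) := by
  rcases eq_or_ne ξ 0 with rfl | hξ
  · have : (2 * s) ≠ 0 := by linarith [hs.1]
    simp [FLK, Real.zero_rpow this]
  set r := ‖ξ‖ with hr
  have hr0 : 0 < r := norm_pos_iff.2 hξ
  have hη : ‖r⁻¹ • ξ‖ = ‖e‖ := by
    rw [norm_smul, he, Real.norm_of_nonneg (by positivity), ← hr]; field_simp
  have hrefl := Submodule.reflection_sub hη
  set R := (ℝ ∙ (r⁻¹ • ξ - e))ᗮ.reflection with hR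
  have h1 : ∫ h, FLK d s (r⁻¹ • ξ) h = ∫ h, FLK d s e h := by
    rw [← (LinearIsometryEquiv.measurePreserving R).integral_comp R.toHomeomorph.measurableEmbedding (FLK d s e)]
    congr 1; ext h
    simp only [FLK]
    rw [← hrefl, R.inner_map_map, R.norm_map]
  have h2 : ∀ h, FLK d s ξ h = r ^ ((d : ℝ) + 2 * s) * FLK d s (r⁻¹ • ξ) (r • h) := by
    intro h
    simp only [FLK]
    rw [norm_smul, Real.norm_of_nonneg hr0.le, Real.mul_rpow hr0.le (norm_nonneg _), inner_smul_left, inner_smul_right]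
    have : r ^ ((d : ℝ) + 2 * s) ≠ 0 := by positivity
    simp only [conj_trivial]
    rw [mul_inv_cancel_left₀ hr0.ne', mul_inv]
    field_simp
  simp_rw [h2]
  rw [integral_const_mul, Measure.integral_comp_smul, h1, finrank_euclideanSpace, Fintype.card_fin,
    abs_of_pos (by positivity), Real.rpow_add hr0, Real.rpow_natCast, smul_eq_mul]
  field_simp

lemma FLK_pos (hd : 1 ≤ d) {s : ℝ} (hs : s ∈ Ioo (0 : ℝ) 1) (e : EuclideanSpace ℝ (Fin d)) (he : ‖e‖ = 1) :
    0 < ∫ h, FLK d s e h := by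
  rw [integral_pos_iff_support_of_nonneg (FLK_nonneg s e) (FLK_integrable hd hs e)]
  have ho : IsOpen {h : EuclideanSpace ℝ (Fin d) | (0 : ℝ) < ⟪h, e⟫ ∧ ⟪h, e⟫ < (1 : ℝ)} := by
    have hc : Continuous fun h : EuclideanSpace ℝ (Fin d) => (⟪h, e⟫ : ℝ) := by fun_prop
    exact isOpen_Ioo.preimage hc
  refine lt_of_lt_of_le (ho.measure_pos volume ⟨(1/2 : ℝ) • e, ?_⟩) (measure_mono ?_)
  · simp only [mem_ofPred_eq, inner_smul_left, real_inner_self_eq_norm_sq, he]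
    norm_num
  · rintro h ⟨h1, h2⟩
    have hh : h ≠ 0 := by rintro rfl; simp at h1
    have hn : 0 < ‖h‖ := norm_pos_iff.2 hh
    have hc : Real.cos (2 * π * ⟪h, e⟫) ≠ 1 := by
      intro hc
      have := (Real.cos_eq_one_iff_of_lt_of_lt (by nlinarith [pi_pos]) (by nlinarith [pi_pos])).1 hc
      have h3 : 0 < 2 * π * ⟪h, e⟫ := by positivity
      linarith
    simp only [Function.mem_support, FLK]
    refine mul_ne_zero (sub_ne_zero.2 hc.symm) (by positivity)

lemma FLW_neg (s δ : ℝ) (h : EuclideanSpace ℝ (Fin d)) : FLW d s δ (-h) = FLW d s δ h := by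
  simp [FLW]

/-- truncated symbol -/
noncomputable def FLm (d : ℕ) (s δ : ℝ) (ξ : EuclideanSpace ℝ (Fin d)) : ℝ :=
  ∫ h, (1 - Real.cos (2 * π * ⟪h, ξ⟫)) * FLW d s δ h

lemma FLm_complex (hd : 1 ≤ d) {s δ : ℝ} (hs : s ∈ Ioo (0 : ℝ) 1) (hδ : 0 < δ)
    (ξ : EuclideanSpace ℝ (Fin d)) :
    ∫ h, (1 - Complex.exp ((-(2 * π * ⟪h, ξ⟫) : ℝ) * Complex.I)) * (FLW d s δ h : ℂ) = (FLm d s δ ξ : ℂ) := by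
  have hW := FLW_integrable hd hs hδ
  have hsin0 : Integrable (fun h => Real.sin (2 * π * ⟪h, ξ⟫) * FLW d s δ h) := by
    refine hW.bdd_mul (c := 1) (by fun_prop) (Eventually.of_forall fun h => ?_)
    exact Real.abs_sin_le_one _
  have hcos0 : Integrable (fun h => (1 - Real.cos (2 * π * ⟪h, ξ⟫)) * FLW d s δ h) := by
    refine hW.bdd_mul (c := 2) (by fun_prop) (Eventually.of_forall fun h => ?_)
    rw [Real.norm_eq_abs, abs_le]
    constructor <;> linarith [Real.cos_le_one (2 * π * ⟪h, ξ⟫), Real.neg_one_le_cos (2 * π * ⟪h, ξ⟫)]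
  have hs0 : ∫ h, Real.sin (2 * π * ⟪h, ξ⟫) * FLW d s δ h = 0 := by
    have := integral_neg_eq_self (fun h => Real.sin (2 * π * ⟪h, ξ⟫) * FLW d s δ h) volume
    simp only [FLW_neg, inner_neg_left, mul_neg, Real.sin_neg, neg_mul, integral_neg] at this
    linarith
  have : ∀ h, (1 - Complex.exp ((-(2 * π * ⟪h, ξ⟫) : ℝ) * Complex.I)) * (FLW d s δ h : ℂ)
      = (((1 - Real.cos (2 * π * ⟪h, ξ⟫)) * FLW d s δ h : ℝ) : ℂ)
        + ((Real.sin (2 * π * ⟪h, ξ⟫) * FLW d s δ h : ℝ) : ℂ) * Complex.I := by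
    intro h
    rw [Complex.exp_mul_I, ← Complex.ofReal_cos, ← Complex.ofReal_sin, Real.cos_neg, Real.sin_neg]
    push_cast; ring
  simp_rw [this]
  rw [integral_add hcos0.ofReal (hsin0.ofReal.mul_const _), integral_mul_const]
  have e1 := integral_complex_ofReal (μ := volume)
    (f := fun h : EuclideanSpace ℝ (Fin d) => (1 - Real.cos (2 * π * ⟪h, ξ⟫)) * FLW d s δ h)
  have e2 := integral_complex_ofReal (μ := volume)
    (f := fun h : EuclideanSpace ℝ (Fin d) => Real.sin (2 * π * ⟪h, ξ⟫) * FLW d s δ h)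
  rw [hs0] at e2
  refine (congrArg₂ (fun a b : ℂ => a + b * Complex.I) e1 e2).trans ?_
  simp [FLm]

lemma FLm_nonneg (s δ : ℝ) (ξ : EuclideanSpace ℝ (Fin d)) : 0 ≤ FLm d s δ ξ := by
  refine integral_nonneg fun h => mul_nonneg ?_ (FLW_nonneg s δ h)
  linarith [Real.cos_le_one (2 * π * ⟪h, ξ⟫)]

lemma FLm_integrand_le (s δ : ℝ) (ξ h : EuclideanSpace ℝ (Fin d)) :
    (1 - Real.cos (2 * π * ⟪h, ξ⟫)) * FLW d s δ h ≤ FLK d s ξ h := by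
  refine mul_le_mul_of_nonneg_left (FLW_le s δ h) ?_
  linarith [Real.cos_le_one (2 * π * ⟪h, ξ⟫)]

lemma FLm_le (hd : 1 ≤ d) {s δ : ℝ} (hs : s ∈ Ioo (0 : ℝ) 1)
    (ξ : EuclideanSpace ℝ (Fin d)) : FLm d s δ ξ ≤ ∫ h, FLK d s ξ h := by
  refine integral_mono_of_nonneg (Eventually.of_forall fun h => mul_nonneg ?_ (FLW_nonneg s δ h))
    (FLK_integrable hd hs ξ) (Eventually.of_forall (FLm_integrand_le s δ ξ))
  linarith [Real.cos_le_one (2 * π * ⟪h, ξ⟫)]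

lemma FLm_tendsto (hd : 1 ≤ d) {s : ℝ} (hs : s ∈ Ioo (0 : ℝ) 1) (ξ : EuclideanSpace ℝ (Fin d)) :
    Tendsto (fun δ => FLm d s δ ξ) (𝓝[>] 0) (𝓝 (∫ h, FLK d s ξ h)) := by
  refine tendsto_integral_filter_of_dominated_convergence (FLK d s ξ) ?_ ?_ (FLK_integrable hd hs ξ) ?_
  · refine Eventually.of_forall fun δ => Measurable.aestronglyMeasurable ?_
    have := FLW_measurable (d := d) s δ
    fun_prop
  · refine Eventually.of_forall fun δ => Eventually.of_forall fun h => ?_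
    rw [Real.norm_of_nonneg (mul_nonneg (by linarith [Real.cos_le_one (2 * π * ⟪h, ξ⟫)]) (FLW_nonneg s δ h))]
    exact FLm_integrand_le s δ ξ h
  · refine Eventually.of_forall fun h => ?_
    refine tendsto_const_nhds.congr' ?_
    rcases eq_or_ne h 0 with rfl | hh
    · simp [FLK]
    · have hn : 0 < ‖h‖ := norm_pos_iff.2 hh
      filter_upwards [Ioo_mem_nhdsGT hn] with δ hδ
      have : ‖h‖ ∈ Ioi δ := hδ.2
      simp only [FLK, FLW, indicator_of_mem this]

lemma FLm_stronglyMeasurable (s δ : ℝ) : StronglyMeasurable (FLm d s δ) := by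
  unfold FLm
  have h0 := FLW_measurable (d := d) s δ
  refine StronglyMeasurable.integral_prod_right
    (f := fun ξ h => (1 - Real.cos (2 * π * ⟪h, ξ⟫)) * FLW d s δ h) (Measurable.stronglyMeasurable ?_)
  simp only [Function.uncurry_def]
  fun_prop

open scoped FourierTransform SchwartzMap

lemma FT_eq (u : 𝓢(EuclideanSpace ℝ (Fin d), ℂ)) : FT (⇑u) = ⇑(𝓕 u : 𝓢(EuclideanSpace ℝ (Fin d), ℂ)) := by
  ext ξ
  rw [SchwartzMap.fourier_coe, Real.fourier_eq', FT]
  simp only [smul_eq_mul, neg_mul]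

lemma FL_inv (u : 𝓢(EuclideanSpace ℝ (Fin d), ℂ)) (x : EuclideanSpace ℝ (Fin d)) :
    u x = ∫ ξ, Complex.exp ((2 * π * ⟪x, ξ⟫ : ℝ) * Complex.I) * (𝓕 u) ξ := by
  have h : 𝓕⁻ (𝓕 u) = u := FourierTransform.fourierInv_fourier_eq u
  conv_lhs => rw [← h]
  rw [SchwartzMap.fourierInv_coe, Real.fourierInv_eq']
  simp only [smul_eq_mul, real_inner_comm]

lemma FL_exp_norm (t : ℝ) : ‖Complex.exp ((t : ℂ) * Complex.I)‖ = 1 := Complex.norm_exp_ofReal_mul_I t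

lemma FL_exp_int (u : 𝓢(EuclideanSpace ℝ (Fin d), ℂ)) (x : EuclideanSpace ℝ (Fin d)) :
    Integrable fun ξ => Complex.exp ((2 * π * ⟪x, ξ⟫ : ℝ) * Complex.I) * (𝓕 u) ξ := by
  refine (𝓕 u).integrable.bdd_mul (c := 1) (Continuous.aestronglyMeasurable (by fun_prop))
    (Eventually.of_forall fun h => (FL_exp_norm _).le)

lemma FL_diff (u : 𝓢(EuclideanSpace ℝ (Fin d), ℂ)) (x h : EuclideanSpace ℝ (Fin d)) :
    u x - u (x - h) = ∫ ξ, Complex.exp ((2 * π * ⟪x, ξ⟫ : ℝ) * Complex.I) * (𝓕 u) ξ *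
      (1 - Complex.exp ((-(2 * π * ⟪h, ξ⟫) : ℝ) * Complex.I)) := by
  rw [FL_inv u x, FL_inv u (x - h), ← integral_sub (FL_exp_int u x) (FL_exp_int u (x - h))]
  congr 1; ext ξ
  rw [inner_sub_left, mul_sub, sub_eq_add_neg (2 * π * ⟪x, ξ⟫), Complex.ofReal_add, add_mul, Complex.exp_add]
  ring

lemma FL_fubini (hd : 1 ≤ d) {s δ : ℝ} (hs : s ∈ Ioo (0 : ℝ) 1) (hδ : 0 < δ)
    (u : 𝓢(EuclideanSpace ℝ (Fin d), ℂ)) (x : EuclideanSpace ℝ (Fin d)) :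
    ∫ h, (u x - u (x - h)) * (FLW d s δ h : ℂ) =
      ∫ ξ, Complex.exp ((2 * π * ⟪x, ξ⟫ : ℝ) * Complex.I) * (𝓕 u) ξ * (FLm d s δ ξ : ℂ) := by
  simp_rw [FL_diff, ← FLm_complex hd hs hδ, ← integral_const_mul, ← integral_mul_const]
  have hW := (FLW_integrable hd hs hδ).ofReal (𝕜 := ℂ)
  rw [integral_integral_swap]
  · congr 1; ext ξ; congr 1; ext h; ring
  · have hp := (hW.mul_prod (FL_exp_int u x))
    have := hp.bdd_mul (c := 2)
      (f := fun z : EuclideanSpace ℝ (Fin d) × EuclideanSpace ℝ (Fin d) =>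
        1 - Complex.exp ((-(2 * π * ⟪z.1, z.2⟫) : ℝ) * Complex.I))
      (Continuous.aestronglyMeasurable (by fun_prop)) (Eventually.of_forall fun z => ?_)
    · refine this.congr (Eventually.of_forall fun z => ?_)
      simp only [Function.uncurry]
      simp only [RCLike.ofReal_eq_complex_ofReal]
      ring
    · refine (norm_sub_le _ _).trans ?_
      rw [FL_exp_norm]; norm_num

lemma FL_subst (s δ : ℝ)
    (u : 𝓢(EuclideanSpace ℝ (Fin d), ℂ)) (x : EuclideanSpace ℝ (Fin d)) :
    ∫ y in {y : EuclideanSpace ℝ (Fin d) | δ < ‖x - y‖},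
              (u x - u y) / ((‖x - y‖ ^ ((d : ℝ) + 2 * s) : ℝ) : ℂ) =
    ∫ h, (u x - u (x - h)) * (FLW d s δ h : ℂ) := by
  rw [← integral_sub_left_eq_self (fun h => (u x - u (x - h)) * (FLW d s δ h : ℂ)) volume x,
    ← integral_indicator (measurableSet_lt (by fun_prop) (by fun_prop))]
  congr 1; ext y
  by_cases hy : δ < ‖x - y‖
  · rw [indicator_of_mem (by exact hy), FLW, indicator_of_mem (by exact hy)]
    rw [sub_sub_cancel, Complex.ofReal_inv, div_eq_mul_inv]
  · rw [indicator_of_notMem (by exact hy), FLW, indicator_of_notMem (by exact hy)]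
    simp

lemma FL_dom (u : 𝓢(EuclideanSpace ℝ (Fin d), ℂ)) {s : ℝ} (hs : s ∈ Ioo (0 : ℝ) 1) :
    Integrable fun ξ => ‖ξ‖ ^ (2 * s) * ‖(𝓕 u) ξ‖ := by
  have h0 := (𝓕 u).integrable_pow_mul volume 0
  have h2 := (𝓕 u).integrable_pow_mul volume 2
  refine (h0.add h2).mono' ?_ (Eventually.of_forall fun ξ => ?_)
  · have := (𝓕 u).continuous.measurable
    exact Measurable.aestronglyMeasurable (by fun_prop)
  · rw [Real.norm_of_nonneg (by positivity)]
    simp only [Pi.add_apply, ← add_mul]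
    gcongr
    rcases le_total ‖ξ‖ 1 with h | h
    · have := Real.rpow_le_one (norm_nonneg ξ) h (by linarith [hs.1] : 0 ≤ 2 * s)
      rw [pow_zero]; nlinarith [sq_nonneg ‖ξ‖]
    · have := Real.rpow_le_rpow_of_exponent_le h (by push_cast; linarith [hs.2] : 2 * s ≤ ((2 : ℕ) : ℝ))
      rw [Real.rpow_natCast] at this
      rw [pow_zero]; linarith

end helpers

/-- Equivalence of the principal-value definition of `(-Δ)^s` with the Fourier
multiplier definition: the truncated singular integrals converge, as `δ → 0⁺`,
to `C ∫ e^{2πi x·ξ} ‖ξ‖^{2s} (𝓕u)(ξ) dξ`. -/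
theorem fracLap_pv_eq_fourier (d : ℕ) (hd : 1 ≤ d) (s : ℝ) (hs : s ∈ Set.Ioo (0 : ℝ) 1) :
    ∃ C : ℝ, 0 < C ∧
      ∀ u : SchwartzMap (EuclideanSpace ℝ (Fin d)) ℂ, ∀ x : EuclideanSpace ℝ (Fin d),
        Filter.Tendsto
          (fun δ : ℝ =>
            ∫ y in {y : EuclideanSpace ℝ (Fin d) | δ < ‖x - y‖},
              (u x - u y) / ((‖x - y‖ ^ ((d : ℝ) + 2 * s) : ℝ) : ℂ))
          (nhdsWithin 0 (Set.Ioi 0))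
          (nhds ((C : ℂ) * ∫ ξ : EuclideanSpace ℝ (Fin d),
            Complex.exp (((2 * Real.pi * ⟪x, ξ⟫) : ℝ) * Complex.I)
              * (‖ξ‖ ^ (2 * s) : ℝ) * FT (⇑u) ξ)) := by
  let e : EuclideanSpace ℝ (Fin d) := EuclideanSpace.single ⟨0, hd⟩ 1
  have he : ‖e‖ = 1 := by simp [e]
  refine ⟨∫ h, FLK d s e h, FLK_pos hd hs e he, fun u x => ?_⟩
  set C := ∫ h, FLK d s e h with hC
  rw [FT_eq, ← integral_const_mul]
  have hev : (fun δ : ℝ => ∫ ξ, Complex.exp ((2 * Real.pi * ⟪x, ξ⟫ : ℝ) * Complex.I)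
      * (FourierTransform.fourier u) ξ * (FLm d s δ ξ : ℂ)) =ᶠ[nhdsWithin 0 (Set.Ioi 0)]
      (fun δ : ℝ =>
            ∫ y in {y : EuclideanSpace ℝ (Fin d) | δ < ‖x - y‖},
              (u x - u y) / ((‖x - y‖ ^ ((d : ℝ) + 2 * s) : ℝ) : ℂ)) := by
    filter_upwards [self_mem_nhdsWithin] with δ hδ
    rw [FL_subst, FL_fubini hd hs hδ]
  refine Filter.Tendsto.congr' hev ?_
  refine tendsto_integral_filter_of_dominated_convergence
    (fun ξ => C * (‖ξ‖ ^ (2 * s) * ‖(FourierTransform.fourier u) ξ‖)) ?_ ?_ ((FL_dom u hs).const_mul C) ?_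
  · refine Filter.Eventually.of_forall fun δ => ?_
    have h1 : AEStronglyMeasurable (fun ξ => (FLm d s δ ξ : ℂ)) :=
      (Complex.continuous_ofReal.comp_stronglyMeasurable (FLm_stronglyMeasurable s δ)).aestronglyMeasurable
    exact (FL_exp_int u x).aestronglyMeasurable.mul h1
  · refine Filter.Eventually.of_forall fun δ => Filter.Eventually.of_forall fun ξ => ?_
    rw [norm_mul, norm_mul, FL_exp_norm, one_mul, Complex.norm_real, Real.norm_of_nonneg (FLm_nonneg s δ ξ),
      ← mul_assoc, mul_comm]
    refine mul_le_mul_of_nonneg_right ?_ (norm_nonneg _)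
    rw [hC, ← FLK_scale hd hs e he]
    exact FLm_le hd hs ξ
  · refine Filter.Eventually.of_forall fun ξ => ?_
    have h1 := FLm_tendsto hd hs ξ
    rw [FLK_scale hd hs e he, ← hC] at h1
    have h2 := ((Complex.continuous_ofReal.tendsto _).comp h1).const_mul
      (Complex.exp ((2 * Real.pi * ⟪x, ξ⟫ : ℝ) * Complex.I) * (FourierTransform.fourier u) ξ)
    have h3 : (C : ℂ) * (Complex.exp (((2 * Real.pi * ⟪x, ξ⟫) : ℝ) * Complex.I)
        * (‖ξ‖ ^ (2 * s) : ℝ) * (FourierTransform.fourier u) ξ) =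
        Complex.exp ((2 * Real.pi * ⟪x, ξ⟫ : ℝ) * Complex.I) * (FourierTransform.fourier u) ξ
          * ((C * ‖ξ‖ ^ (2 * s) : ℝ) : ℂ) := by
      rw [Complex.ofReal_mul C]; ring
    rw [h3]
    exact h2
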